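/- arXiv:2412.17721 — 4 statements merged into one kernel-verified Lean document; each statement's English description precedes it below -/
import Mathlib

section
/- Let R = ℂ[u₃,u₁,u₋₁,u₋₃] with the subspace U₆ defined in the context, and let D₁, D₂, D₃ be the second-order constant-coefficient differential operators on R given by D₁ = 3∂_{u₋₃}∂_{u₁} − ∂_{u₋₁}², D₂ = 9∂_{u₃}∂_{u₋₃} − ∂_{u₁}∂_{u₋₁}, D₃ = 3∂_{u₋₁}∂_{u₃} − ∂_{u₁}². Then a homogeneous polynomial p ∈ R of degree 2 satisfies D₁(p) = D₂(p) = D₃(p) = 0 if and only if p ∈ U₆. (This expresses that U₆ is the apolar space q^⊥ of the SL₂-invariant net of quadrics q = ⟨3u₋₃*u₁* − u₋₁*², 9u₃*u₋₃* − u₁*u₋₁*, 3u₋₁*u₃* − u₁*²⟩ under the polar pairing Sym²W₃* ⊗ Sym²W₃ → ℂ.) -/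
open MvPolynomial

noncomputable section

/-- `R4 = ℂ[u₃, u₁, u₋₁, u₋₃]`, with `u₃ = X 0`, `u₁ = X 1`, `u₋₁ = X 2`, `u₋₃ = X 3`. -/
abbrev R4 : Type := MvPolynomial (Fin 4) ℂ

def w6 : R4 := X 0 ^ 2
def w4 : R4 := X 0 * X 1
def w2 : R4 := 3 * X 1 ^ 2 + 2 * X 0 * X 2
def w0 : R4 := 9 * X 1 * X 2 + X 0 * X 3
def wm2 : R4 := 3 * X 2 ^ 2 + 2 * X 1 * X 3
def wm4 : R4 := X 2 * X 3
def wm6 : R4 := X 3 ^ 2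

/-- `U₆` is the ℂ-linear span of the seven quadrics `w₆, …, w₋₆`. -/
def U6 : Submodule ℂ R4 :=
  Submodule.span ℂ {w6, w4, w2, w0, wm2, wm4, wm6}

/-- `D₁ = 3∂_{u₋₃}∂_{u₁} − ∂_{u₋₁}²` applied to `p`. -/
def D1 (p : R4) : R4 := 3 * pderiv 3 (pderiv 1 p) - pderiv 2 (pderiv 2 p)
/-- `D₂ = 9∂_{u₃}∂_{u₋₃} − ∂_{u₁}∂_{u₋₁}` applied to `p`. -/
def D2 (p : R4) : R4 := 9 * pderiv 0 (pderiv 3 p) - pderiv 1 (pderiv 2 p)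
/-- `D₃ = 3∂_{u₋₁}∂_{u₃} − ∂_{u₁}²` applied to `p`. -/
def D3 (p : R4) : R4 := 3 * pderiv 2 (pderiv 0 p) - pderiv 1 (pderiv 1 p)

lemma quad_form (p : R4) (hp : p ∈ homogeneousSubmodule (Fin 4) ℂ 2) :
    ∃ a b c d e f g h i j : ℂ, p = C a * X 0 ^ 2 + C b * (X 0 * X 1) + C c * (X 0 * X 2)
      + C d * (X 0 * X 3) + C e * X 1 ^ 2 + C f * (X 1 * X 2) + C g * (X 1 * X 3)
      + C h * X 2 ^ 2 + C i * (X 2 * X 3) + C j * X 3 ^ 2 := by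
  have hp : p.IsHomogeneous 2 := hp
  have key : ∀ i j : Fin 4, ∃ c : ℂ, pderiv i (pderiv j p) = C c := fun i j =>
    ⟨_, totalDegree_eq_zero_iff_eq_C.1 ((totalDegree_zero_iff_isHomogeneous _).2 ((hp.pderiv).pderiv))⟩
  choose c hc using key
  have h1 : ∀ j, pderiv j p = ∑ i, X i * C (c i j) := fun j => by
    have := (hp.pderiv (i := j)).sum_X_mul_pderiv
    simp only [hc] at this
    simpa using this.symm
  have h2 := hp.sum_X_mul_pderiv
  simp only [h1, Fin.sum_univ_four] at h2
  have h3 : p = C (1/2) * (2 • p) := by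
    have : (C (1/2) : R4) * 2 = 1 := by
      rw [show (2 : R4) = C 2 from rfl, ← C_mul]; norm_num
    rw [nsmul_eq_mul, Nat.cast_ofNat, ← mul_assoc, this, one_mul]
  refine ⟨1/2 * c 0 0, 1/2 * (c 0 1 + c 1 0), 1/2 * (c 0 2 + c 2 0), 1/2 * (c 0 3 + c 3 0),
    1/2 * c 1 1, 1/2 * (c 1 2 + c 2 1), 1/2 * (c 1 3 + c 3 1), 1/2 * c 2 2,
    1/2 * (c 2 3 + c 3 2), 1/2 * c 3 3, ?_⟩
  rw [h3, ← h2]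
  simp only [C_mul, C_add]
  ring

/-- A homogeneous quadric is apolar to the net of quadrics iff it lies in `U₆`. -/
theorem stmt4 (p : R4) (hp : p ∈ homogeneousSubmodule (Fin 4) ℂ 2) :
    (D1 p = 0 ∧ D2 p = 0 ∧ D3 p = 0) ↔ p ∈ U6 := by
  have n3 : (3 : R4) = C 3 := rfl
  have n9 : (9 : R4) = C 9 := rfl
  have n2 : (2 : R4) = C 2 := rfl
  constructor
  · obtain ⟨a, b, c, d, e, f, g, h, i, j, rfl⟩ := quad_form p hp
    rintro ⟨h1, h2, h3⟩
    have e1 := congrArg (eval 0) h1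
    have e2 := congrArg (eval 0) h2
    have e3 := congrArg (eval 0) h3
    simp [D1, D2, D3, pderiv_X, Pi.single_apply, n3, n9, n2] at e1 e2 e3
    have q1 : g = 2 * (h / 3) := by linear_combination e1 / 3
    have q2 : f = 9 * d := by linear_combination -e2
    have q3 : c = 2 * (e / 3) := by linear_combination e3 / 3
    obtain ⟨h', rfl⟩ : ∃ k, h = 3 * k := ⟨h / 3, by ring⟩
    obtain ⟨e', rfl⟩ : ∃ k, e = 3 * k := ⟨e / 3, by ring⟩
    have q1 : g = 2 * h' := by linear_combination q1
    have q3 : c = 2 * e' := by linear_combination q3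
    subst q1 q2 q3
    have hm : ∀ w ∈ ({w6, w4, w2, w0, wm2, wm4, wm6} : Set R4), ∀ t : ℂ, C t * w ∈ U6 := by
      intro w hw t
      rw [← smul_eq_C_mul]
      exact U6.smul_mem t (Submodule.subset_span hw)
    have := U6.add_mem (U6.add_mem (U6.add_mem (U6.add_mem (U6.add_mem (U6.add_mem
      (hm w6 (by simp) a) (hm w4 (by simp) b)) (hm w2 (by simp) e')) (hm w0 (by simp) d))
      (hm wm2 (by simp) h')) (hm wm4 (by simp) i)) (hm wm6 (by simp) j)
    convert this using 1
    simp only [w6, w4, w2, w0, wm2, wm4, wm6, n2, n3, n9, C_mul]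
    ring
  · intro h
    clear hp
    unfold U6 at h
    induction h using Submodule.span_induction with
    | mem x hx =>
      simp only [Set.mem_insert_iff, Set.mem_singleton_iff] at hx
      rcases hx with rfl | rfl | rfl | rfl | rfl | rfl | rfl <;>
      simp [D1, D2, D3, w6, w4, w2, w0, wm2, wm4, wm6, pderiv_X, Pi.single_apply, n3, n9, n2]
    | zero => simp [D1, D2, D3]
    | add x y _ _ hx hy =>
      obtain ⟨a, b, c⟩ := hx
      obtain ⟨a', b', c'⟩ := hy
      simp only [D1, D2, D3, map_add] at *
      exact ⟨by linear_combination a + a', by linear_combination b + b',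
        by linear_combination c + c'⟩
    | smul t x _ hx =>
      obtain ⟨a, b, c⟩ := hx
      simp only [D1, D2, D3, map_smul, smul_eq_C_mul, pderiv_C_mul] at *
      exact ⟨by linear_combination C t * a, by linear_combination C t * b,
        by linear_combination C t * c⟩
end
end

section
/- With A_e, A_f ∈ M₇(ℂ), the operators ρ_e(B) = −(A_eᵀB + BA_e), ρ_f(B) = −(A_fᵀB + BA_f) on skew-symmetric 7×7 complex matrices, and the skew-symmetric matrices N₁, N₂, N₃ as in the context: for every ℂ-subspace S of the space of skew-symmetric 7×7 complex matrices such that dim_ℂ S = 3, ρ_e(S) ⊆ S and ρ_f(S) ⊆ S, one has S equal to the ℂ-linear span of {N₁, N₂, N₃}. (The span of N₁, N₂, N₃ is the unique 3-dimensional sl₂-subrepresentation of ∧²U₆*.) -/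
open Matrix

noncomputable section

/-- Matrix of the sl₂-operator `e` on `U₆` in the ordered basis `(w₆,…,w₋₆)`. -/
def Ae : Matrix (Fin 7) (Fin 7) ℂ :=
  !![0,1,0,0,0,0,0;
     0,0,10,0,0,0,0;
     0,0,0,6,0,0,0;
     0,0,0,0,2,0,0;
     0,0,0,0,0,1,0;
     0,0,0,0,0,0,6;
     0,0,0,0,0,0,0]

/-- Matrix of the sl₂-operator `f` on `U₆` in the ordered basis `(w₆,…,w₋₆)`. -/
def Af : Matrix (Fin 7) (Fin 7) ℂ :=
  !![0,0,0,0,0,0,0;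
     6,0,0,0,0,0,0;
     0,1,0,0,0,0,0;
     0,0,2,0,0,0,0;
     0,0,0,6,0,0,0;
     0,0,0,0,10,0,0;
     0,0,0,0,0,1,0]

/-- The induced sl₂-action of `e` on alternating forms. -/
def rhoE (B : Matrix (Fin 7) (Fin 7) ℂ) : Matrix (Fin 7) (Fin 7) ℂ :=
  -(Aeᵀ * B + B * Ae)

/-- The induced sl₂-action of `f` on alternating forms. -/
def rhoF (B : Matrix (Fin 7) (Fin 7) ℂ) : Matrix (Fin 7) (Fin 7) ℂ :=
  -(Afᵀ * B + B * Af)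

/-- `N₁ = (3/5)w₋₆*∧w₄* − w₋₄*∧w₂* + 6w₋₂*∧w₀*`. -/
def N1 : Matrix (Fin 7) (Fin 7) ℂ :=
  !![0,0,0,0,0,0,0;
     0,0,0,0,0,0,-3/5;
     0,0,0,0,0,1,0;
     0,0,0,0,-6,0,0;
     0,0,0,6,0,0,0;
     0,0,-1,0,0,0,0;
     0,3/5,0,0,0,0,0]

/-- `N₂ = −(1/5)w₋₄*∧w₄* + (9/5)w₋₆*∧w₆* + w₋₂*∧w₂*`. -/
def N2 : Matrix (Fin 7) (Fin 7) ℂ :=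
  !![0,0,0,0,0,0,-9/5;
     0,0,0,0,0,1/5,0;
     0,0,0,0,-1,0,0;
     0,0,0,0,0,0,0;
     0,0,1,0,0,0,0;
     0,-1/5,0,0,0,0,0;
     9/5,0,0,0,0,0,0]

/-- `N₃ = −w₋₂*∧w₄* + (3/5)w₋₄*∧w₆* + 6w₀*∧w₂*`. -/
def N3 : Matrix (Fin 7) (Fin 7) ℂ :=
  !![0,0,0,0,0,-3/5,0;
     0,0,0,0,1,0,0;
     0,0,0,-6,0,0,0;
     0,0,6,0,0,0,0;
     0,-1,0,0,0,0,0;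
     3/5,0,0,0,0,0,0;
     0,0,0,0,0,0,0]


namespace Stmt7Aux

def ce : Fin 7 → ℂ := ![0,1,10,6,2,1,6]
def pe : Fin 7 → Fin 7 := ![0,0,1,2,3,4,5]
def cf : Fin 7 → ℂ := ![6,1,2,6,10,1,0]
def pf : Fin 7 → Fin 7 := ![1,2,3,4,5,6,6]

lemma rhoE_apply (B : Matrix (Fin 7) (Fin 7) ℂ) (i j : Fin 7) :
    rhoE B i j = -(ce i * B (pe i) j + ce j * B i (pe j)) := by
  have h1 : ∀ i k, Ae k i = if k = pe i then ce i else 0 := by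
    intro i k
    fin_cases i <;> fin_cases k <;> simp [Ae, pe, ce]
  simp only [rhoE, Matrix.neg_apply, Matrix.add_apply, Matrix.mul_apply, Matrix.transpose_apply, h1]
  simp [mul_comm]

lemma rhoF_apply (B : Matrix (Fin 7) (Fin 7) ℂ) (i j : Fin 7) :
    rhoF B i j = -(cf i * B (pf i) j + cf j * B i (pf j)) := by
  have h1 : ∀ i k, Af k i = if k = pf i then cf i else 0 := by
    intro i k
    fin_cases i <;> fin_cases k <;> simp [Af, pf, cf]
  simp only [rhoF, Matrix.neg_apply, Matrix.add_apply, Matrix.mul_apply, Matrix.transpose_apply, h1]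
  simp [mul_comm]

set_option maxHeartbeats 2000000 in
lemma Ae_nil : IsNilpotent Ae := by
  refine ⟨7, ?_⟩
  have h2 : Ae ^ 2 = !![0,0,10,0,0,0,0; 0,0,0,60,0,0,0; 0,0,0,0,12,0,0; 0,0,0,0,0,2,0;
      0,0,0,0,0,0,6; 0,0,0,0,0,0,0; 0,0,0,0,0,0,0] := by
    rw [pow_two]
    ext i j
    fin_cases i <;> fin_cases j <;> norm_num [Ae, Matrix.mul_apply, Fin.sum_univ_succ]
  have h4 : Ae ^ 4 = !![0,0,0,0,120,0,0; 0,0,0,0,0,120,0; 0,0,0,0,0,0,72; 0,0,0,0,0,0,0;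
      0,0,0,0,0,0,0; 0,0,0,0,0,0,0; 0,0,0,0,0,0,0] := by
    have h22 : Ae ^ 4 = Ae ^ 2 * Ae ^ 2 := by rw [← pow_add]
    rw [h22, h2]
    ext i j
    fin_cases i <;> fin_cases j <;> norm_num [Matrix.mul_apply, Fin.sum_univ_succ]
  have h8 : Ae ^ 7 = Ae ^ 4 * Ae ^ 2 * Ae := by
    rw [← pow_add, ← pow_succ]
  rw [h8, h4, h2]
  ext i j
  fin_cases i <;> fin_cases j <;> norm_num [Ae, Matrix.mul_apply, Fin.sum_univ_succ]

set_option maxHeartbeats 2000000 in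
lemma Af_nil : IsNilpotent Af := by
  refine ⟨7, ?_⟩
  have h2 : Af ^ 2 = !![0,0,0,0,0,0,0; 0,0,0,0,0,0,0; 6,0,0,0,0,0,0; 0,2,0,0,0,0,0;
      0,0,12,0,0,0,0; 0,0,0,60,0,0,0; 0,0,0,0,10,0,0] := by
    rw [pow_two]
    ext i j
    fin_cases i <;> fin_cases j <;> norm_num [Af, Matrix.mul_apply, Fin.sum_univ_succ]
  have h4 : Af ^ 4 = !![0,0,0,0,0,0,0; 0,0,0,0,0,0,0; 0,0,0,0,0,0,0; 0,0,0,0,0,0,0;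
      72,0,0,0,0,0,0; 0,120,0,0,0,0,0; 0,0,120,0,0,0,0] := by
    have h22 : Af ^ 4 = Af ^ 2 * Af ^ 2 := by rw [← pow_add]
    rw [h22, h2]
    ext i j
    fin_cases i <;> fin_cases j <;> norm_num [Matrix.mul_apply, Fin.sum_univ_succ]
  have h8 : Af ^ 7 = Af ^ 4 * Af ^ 2 * Af := by
    rw [← pow_add, ← pow_succ]
  rw [h8, h4, h2]
  ext i j
  fin_cases i <;> fin_cases j <;> norm_num [Af, Matrix.mul_apply, Fin.sum_univ_succ]

/-- A nilpotent operator of the form `B ↦ -(Aᵀ B + B A)` has vanishing cube on an invariant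
subspace of dimension three. -/
lemma cube_zero (A : Matrix (Fin 7) (Fin 7) ℂ) (hA : IsNilpotent A)
    (S : Submodule ℂ (Matrix (Fin 7) (Fin 7) ℂ)) (hdim : Module.finrank ℂ S = 3)
    (r : Matrix (Fin 7) (Fin 7) ℂ → Matrix (Fin 7) (Fin 7) ℂ)
    (hr : ∀ B, r B = -(Aᵀ * B + B * A)) (hS : ∀ B ∈ S, r B ∈ S) :
    ∀ B ∈ S, r (r (r B)) = 0 := by
  intro B hB
  let T : Module.End ℂ (Matrix (Fin 7) (Fin 7) ℂ) :=
    -(LinearMap.mulLeft ℂ Aᵀ + LinearMap.mulRight ℂ A)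
  have hT : ∀ B, T B = r B := by intro B; simp [T, hr]
  have hAt : IsNilpotent Aᵀ := by
    obtain ⟨n, hn⟩ := hA
    exact ⟨n, by rw [← Matrix.transpose_pow, hn, Matrix.transpose_zero]⟩
  have hTn : IsNilpotent T := by
    refine IsNilpotent.neg ?_
    refine Commute.isNilpotent_add (LinearMap.commute_mulLeft_right _ _) ?_ ?_
    · exact (LinearMap.isNilpotent_mulLeft_iff ℂ _).2 hAt
    · exact (LinearMap.isNilpotent_mulRight_iff ℂ _).2 hA
  have hmap : ∀ B ∈ S, T B ∈ S := fun B hB => by rw [hT]; exact hS B hB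
  obtain ⟨n, hn⟩ := hTn
  let t : Module.End ℂ S := T.restrict hmap
  have htn : t ^ n = 0 := by
    rw [Module.End.pow_restrict]
    ext x
    simp [hn]
  have h3 := Module.End.ker_pow_le_ker_pow_finrank t n
  rw [htn, hdim] at h3
  have h4 : (t ^ 3) ⟨B, hB⟩ = 0 := h3 (by simp)
  have h5 := congrArg Subtype.val h4
  simpa [pow_succ, t, LinearMap.restrict_apply, hT] using h5

set_option maxHeartbeats 4000000 in
lemma mem_span (B : Matrix (Fin 7) (Fin 7) ℂ) (hB : Bᵀ = -B)
    (hE : rhoE (rhoE (rhoE B)) = 0) (hF : rhoF (rhoF (rhoF B)) = 0) :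
    B ∈ Submodule.span ℂ ({N1, N2, N3} : Set (Matrix (Fin 7) (Fin 7) ℂ)) := by
  have hs : ∀ i j, B j i = - B i j := fun i j => congrFun (congrFun hB i) j
  have hd : ∀ i, B i i = 0 := fun i => by
    have := hs i i
    linear_combination (1/2) * this
  have kE : ∀ i j, rhoE (rhoE (rhoE B)) i j = 0 := fun i j => by rw [hE]; rfl
  have kF : ∀ i j, rhoF (rhoF (rhoF B)) i j = 0 := fun i j => by rw [hF]; rfl
  simp only [rhoE_apply] at kE
  simp only [rhoF_apply] at kF
  have d0 := hd 0
  have d1 := hd 1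
  have d2 := hd 2
  have d3 := hd 3
  have d4 := hd 4
  have d5 := hd 5
  have d6 := hd 6
  have s01 := hs 0 1
  have s02 := hs 0 2
  have s03 := hs 0 3
  have s04 := hs 0 4
  have s05 := hs 0 5
  have s06 := hs 0 6
  have s12 := hs 1 2
  have s13 := hs 1 3
  have s14 := hs 1 4
  have s15 := hs 1 5
  have s16 := hs 1 6
  have s23 := hs 2 3
  have s24 := hs 2 4
  have s25 := hs 2 5
  have s26 := hs 2 6
  have s34 := hs 3 4
  have s35 := hs 3 5
  have s36 := hs 3 6
  have s45 := hs 4 5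
  have s46 := hs 4 6
  have s56 := hs 5 6
  have eE04 : (-120) * B 0 1 = 0 := by
    have h := kE 0 4
    simp [ce, pe] at h
    grind
  have eE13 : (-120) * B 0 1 = 0 := by
    have h := kE 1 3
    simp [ce, pe] at h
    grind
  have v01 : B 0 1 = 0 := by
    linear_combination (-1/120) * eE04
  have eE05 : (-12) * B 0 2 = 0 := by
    have h := kE 0 5
    simp [ce, pe] at h
    grind
  have eE14 : (-36) * B 0 2 = 0 := by
    have h := kE 1 4
    simp [ce, pe] at h
    grind
  have eE23 : (-120) * B 0 2 = 0 := by
    have h := kE 2 3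
    simp [ce, pe] at h
    grind
  have v02 : B 0 2 = 0 := by
    linear_combination (-1/12) * eE05
  have eE06 : (-12) * B 0 3 = 0 := by
    have h := kE 0 6
    simp [ce, pe] at h
    grind
  have eE15 : (-6) * B 0 3 + (-12) * B 1 2 = 0 := by
    have h := kE 1 5
    simp [ce, pe] at h
    grind
  have eE24 : (-60) * B 0 3 + (-240) * B 1 2 = 0 := by
    have h := kE 2 4
    simp [ce, pe] at h
    grind
  have v03 : B 0 3 = 0 := by
    linear_combination (-1/12) * eE06
  have v12 : B 1 2 = 0 := by
    linear_combination (1/24) * eE06 + (-1/12) * eE15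
  have eE16 : (-18) * B 0 4 + (-12) * B 1 3 = 0 := by
    have h := kE 1 6
    simp [ce, pe] at h
    grind
  have eE25 : (-30) * B 0 4 + (-60) * B 1 3 = 0 := by
    have h := kE 2 5
    simp [ce, pe] at h
    grind
  have eE34 : (-60) * B 0 4 + (-240) * B 1 3 = 0 := by
    have h := kE 3 4
    simp [ce, pe] at h
    grind
  have eF01 : (-12) * B 0 4 + (-24) * B 1 3 = 0 := by
    have h := kF 0 1
    simp [cf, pf] at h
    grind
  have v04 : B 0 4 = 0 := by
    linear_combination (-1/12) * eE16 + (1/60) * eE25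
  have v13 : B 1 3 = 0 := by
    linear_combination (1/24) * eE16 + (-1/40) * eE25
  have eE26 : (-180) * B 0 5 + (-180) * B 1 4 + (-12) * B 2 3 = 0 := by
    have h := kE 2 6
    simp [ce, pe] at h
    grind
  have eE35 : (-60) * B 0 5 + (-180) * B 1 4 + (-24) * B 2 3 = 0 := by
    have h := kE 3 5
    simp [ce, pe] at h
    grind
  have eF02 : (-120) * B 0 5 + (-216) * B 1 4 + (-24) * B 2 3 = 0 := by
    have h := kF 0 2
    simp [cf, pf] at h
    grind
  have v05 : B 0 5 = (-3/5) * B 1 4 := by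
    linear_combination (-1/150) * eE26 + (1/300) * eE35
  have v23 : B 2 3 = (-6) * B 1 4 := by
    linear_combination (1/60) * eE26 + (-1/20) * eE35
  have eE36 : (-60) * B 0 6 + (-1080) * B 1 5 + (-108) * B 2 4 = 0 := by
    have h := kE 3 6
    simp [ce, pe] at h
    grind
  have eE45 : (-120) * B 1 5 + (-24) * B 2 4 = 0 := by
    have h := kE 4 5
    simp [ce, pe] at h
    grind
  have eF03 : (-60) * B 0 6 + (-1080) * B 1 5 + (-108) * B 2 4 = 0 := by
    have h := kF 0 3
    simp [cf, pf] at h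
    grind
  have eF12 : (-120) * B 1 5 + (-24) * B 2 4 = 0 := by
    have h := kF 1 2
    simp [cf, pf] at h
    grind
  have v06 : B 0 6 = (9/5) * B 2 4 := by
    linear_combination (-1/60) * eE36 + (3/20) * eE45
  have v15 : B 1 5 = (-1/5) * B 2 4 := by
    linear_combination (-1/120) * eE45
  have eE46 : (-120) * B 1 6 + (-216) * B 2 5 + (-24) * B 3 4 = 0 := by
    have h := kE 4 6
    simp [ce, pe] at h
    grind
  have eF04 : (-180) * B 1 6 + (-180) * B 2 5 + (-12) * B 3 4 = 0 := by
    have h := kF 0 4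
    simp [cf, pf] at h
    grind
  have eF13 : (-60) * B 1 6 + (-180) * B 2 5 + (-24) * B 3 4 = 0 := by
    have h := kF 1 3
    simp [cf, pf] at h
    grind
  have v16 : B 1 6 = (-3/5) * B 2 5 := by
    linear_combination (1/240) * eE46 + (-1/120) * eF04
  have v34 : B 3 4 = (-6) * B 2 5 := by
    linear_combination (-1/16) * eE46 + (1/24) * eF04
  have eE56 : (-12) * B 2 6 + (-24) * B 3 5 = 0 := by
    have h := kE 5 6
    simp [ce, pe] at h
    grind
  have eF05 : (-18) * B 2 6 + (-12) * B 3 5 = 0 := by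
    have h := kF 0 5
    simp [cf, pf] at h
    grind
  have eF14 : (-30) * B 2 6 + (-60) * B 3 5 = 0 := by
    have h := kF 1 4
    simp [cf, pf] at h
    grind
  have eF23 : (-60) * B 2 6 + (-240) * B 3 5 = 0 := by
    have h := kF 2 3
    simp [cf, pf] at h
    grind
  have v26 : B 2 6 = 0 := by
    linear_combination (1/24) * eE56 + (-1/12) * eF05
  have v35 : B 3 5 = 0 := by
    linear_combination (-1/16) * eE56 + (1/24) * eF05
  have eF06 : (-12) * B 3 6 = 0 := by
    have h := kF 0 6
    simp [cf, pf] at h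
    grind
  have eF15 : (-6) * B 3 6 + (-12) * B 4 5 = 0 := by
    have h := kF 1 5
    simp [cf, pf] at h
    grind
  have eF24 : (-60) * B 3 6 + (-240) * B 4 5 = 0 := by
    have h := kF 2 4
    simp [cf, pf] at h
    grind
  have v36 : B 3 6 = 0 := by
    linear_combination (-1/12) * eF06
  have v45 : B 4 5 = 0 := by
    linear_combination (1/24) * eF06 + (-1/12) * eF15
  have eF16 : (-12) * B 4 6 = 0 := by
    have h := kF 1 6
    simp [cf, pf] at h
    grind
  have eF25 : (-36) * B 4 6 = 0 := by
    have h := kF 2 5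
    simp [cf, pf] at h
    grind
  have eF34 : (-120) * B 4 6 = 0 := by
    have h := kF 3 4
    simp [cf, pf] at h
    grind
  have v46 : B 4 6 = 0 := by
    linear_combination (-1/12) * eF16
  have eF26 : (-120) * B 5 6 = 0 := by
    have h := kF 2 6
    simp [cf, pf] at h
    grind
  have eF35 : (-120) * B 5 6 = 0 := by
    have h := kF 3 5
    simp [cf, pf] at h
    grind
  have v56 : B 5 6 = 0 := by
    linear_combination (-1/120) * eF26
  have key : B = (B 2 5) • N1 + (-(B 2 4)) • N2 + (B 1 4) • N3 := by
    ext i j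
    fin_cases i <;> fin_cases j <;> simp [N1, N2, N3] <;> grind
  rw [key]
  refine add_mem (add_mem ?_ ?_) ?_ <;>
    exact Submodule.smul_mem _ _ (Submodule.subset_span (by simp))

end Stmt7Aux

/-- The span of `N₁, N₂, N₃` is the unique 3-dimensional sl₂-subrepresentation of `∧²U₆*`. -/
theorem stmt7 (S : Submodule ℂ (Matrix (Fin 7) (Fin 7) ℂ))
    (hskew : ∀ B ∈ S, Bᵀ = -B)
    (hdim : Module.finrank ℂ S = 3)
    (he : ∀ B ∈ S, rhoE B ∈ S)
    (hf : ∀ B ∈ S, rhoF B ∈ S) :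
    S = Submodule.span ℂ ({N1, N2, N3} : Set (Matrix (Fin 7) (Fin 7) ℂ)) := by
  have hle : S ≤ Submodule.span ℂ ({N1, N2, N3} : Set (Matrix (Fin 7) (Fin 7) ℂ)) := by
    intro B hB
    exact Stmt7Aux.mem_span B (hskew B hB)
      (Stmt7Aux.cube_zero Ae Stmt7Aux.Ae_nil S hdim rhoE (fun _ => rfl) he B hB)
      (Stmt7Aux.cube_zero Af Stmt7Aux.Af_nil S hdim rhoF (fun _ => rfl) hf B hB)
  refine Submodule.eq_of_le_of_finrank_le hle ?_
  rw [hdim]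
  classical
  have h := finrank_span_finset_le_card (R := ℂ)
    ({N1, N2, N3} : Finset (Matrix (Fin 7) (Fin 7) ℂ))
  have h2 := Finset.card_le_three (a := N1) (b := N2) (c := N3)
  have hc : ((({N1, N2, N3} : Finset (Matrix (Fin 7) (Fin 7) ℂ))) :
      Set (Matrix (Fin 7) (Fin 7) ℂ)) = {N1, N2, N3} := by
    ext x
    simp
  rw [Set.finrank, hc] at h
  exact h.trans h2
end
end

section
/- Let η be the 7×7 skew-symmetric matrix of linear forms over ℂ[y₂,y₀,y₋₂] defined in the context. For each i ∈ {1,…,7}, the determinant of the 6×6 matrix obtained from η by deleting the i-th row and the i-th column is the square of a homogeneous cubic polynomial in y₂, y₀, y₋₂. Moreover, the ideal of ℂ[y₂,y₀,y₋₂] generated by these seven determinants equals the ideal generated by the squares of the seven cubics y₂³, y₂²y₀, y₂y₀² + y₂²y₋₂, y₀³ + 6y₂y₀y₋₂, y₀²y₋₂ + y₂y₋₂², y₀y₋₂², y₋₂³. -/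
open MvPolynomial Matrix

noncomputable section

/-- `R3 = ℂ[y₂, y₀, y₋₂]`, with `y₂ = X 0`, `y₀ = X 1`, `y₋₂ = X 2`. -/
abbrev R3 : Type := MvPolynomial (Fin 3) ℂ

/-- The SL₂-invariant net of alternating forms `η` defining the Mukai–Umemura threefold. -/
def eta : Matrix (Fin 7) (Fin 7) R3 :=
  !![0, 0, 0, 0, 0, -(C (3/5) * X 0), -(C (9/5) * X 1);
     0, 0, 0, 0, X 0, C (1/5) * X 1, -(C (3/5) * X 2);
     0, 0, 0, -(6 * X 0), -(X 1), X 2, 0;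
     0, 0, 6 * X 0, 0, -(6 * X 2), 0, 0;
     0, -(X 0), X 1, 6 * X 2, 0, 0, 0;
     C (3/5) * X 0, -(C (1/5) * X 1), -(X 2), 0, 0, 0, 0;
     C (9/5) * X 1, C (3/5) * X 2, 0, 0, 0, 0, 0]

/-- The seven cubics (the 6×6 principal Pfaffians of `η`). -/
def pfCubic : Fin 7 → R3 :=
  ![X 0 ^ 3,
    X 0 ^ 2 * X 1,
    X 0 * X 1 ^ 2 + X 0 ^ 2 * X 2,
    X 1 ^ 3 + 6 * X 0 * X 1 * X 2,
    X 1 ^ 2 * X 2 + X 0 * X 2 ^ 2,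
    X 1 * X 2 ^ 2,
    X 2 ^ 3]

/-- The scalars relating the Pfaffians of `eta` to the cubics. -/
def pfScalar : Fin 7 → ℂ :=
  ![18/5, 54/5, 54/25, 9/25, 54/25, 54/5, 18/5]

/-- A version of `eta` over a general commutative ring, with `t` in the role of `1/5`. -/
def etaGen {R : Type*} [CommRing R] (t x y z : R) : Matrix (Fin 7) (Fin 7) R :=
  !![0, 0, 0, 0, 0, -(3 * t * x), -(9 * t * y);
     0, 0, 0, 0, x, t * y, -(3 * t * z);
     0, 0, 0, -(6 * x), -y, z, 0;
     0, 0, 6 * x, 0, -(6 * z), 0, 0;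
     0, -x, y, 6 * z, 0, 0, 0;
     3 * t * x, -(t * y), -z, 0, 0, 0, 0;
     9 * t * y, 3 * t * z, 0, 0, 0, 0, 0]

/-- The principal Pfaffians of `etaGen`. -/
def pfGen {R : Type*} [CommRing R] (t x y z : R) : Fin 7 → R :=
  ![18 * t * z ^ 3,
    54 * t * (y * z ^ 2),
    54 * t ^ 2 * (y ^ 2 * z + x * z ^ 2),
    9 * t ^ 2 * (y ^ 3 + x * y * z) + 9 * t * (x * y * z),
    54 * t ^ 2 * (x * y ^ 2 + x ^ 2 * z),
    54 * t * (x ^ 2 * y),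
    18 * t * x ^ 3]

set_option maxHeartbeats 4000000 in
theorem det_etaGen {R : Type*} [CommRing R] (t x y z : R) (i : Fin 7) :
    ((etaGen t x y z).submatrix i.succAbove i.succAbove).det = pfGen t x y z i ^ 2 := by
  fin_cases i <;>
  · simp [etaGen, pfGen, Matrix.det_succ_row_zero, Fin.sum_univ_succ, Fin.succAbove]
    ring

theorem C_ofNat_mul (k : ℂ) (n : ℕ) [n.AtLeastTwo] :
    (OfNat.ofNat n : R3) * C k = C ((OfNat.ofNat n : ℂ) * k) := by
  rw [map_mul, map_ofNat]

theorem eta_eq : eta = etaGen (C (1/5)) (X 0) (X 1) (X 2) := by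
  have h3 : (C (3/5) : R3) = 3 * C (1/5) := by rw [C_ofNat_mul]; norm_num
  have h9 : (C (9/5) : R3) = 9 * C (1/5) := by rw [C_ofNat_mul]; norm_num
  rw [eta, etaGen, h3, h9]

theorem det_eta (i : Fin 7) :
    (eta.submatrix i.succAbove i.succAbove).det = (C (pfScalar i) * pfCubic i.rev) ^ 2 := by
  rw [eta_eq, det_etaGen]
  congr 1
  have h5 : (5 : R3) * C (1/5) = 1 := by
    rw [C_ofNat_mul, ← map_one C]; norm_num
  have h18 : (C (18/5) : R3) = 18 * C (1/5) := by rw [C_ofNat_mul]; norm_num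
  have h54 : (C (54/5) : R3) = 54 * C (1/5) := by rw [C_ofNat_mul]; norm_num
  have h54' : (C (54/25) : R3) = 54 * C (1/5) ^ 2 := by
    rw [← map_pow, C_ofNat_mul]; norm_num
  have h9 : (C (9/25) : R3) = 9 * C (1/5) ^ 2 := by
    rw [← map_pow, C_ofNat_mul]; norm_num
  fin_cases i
  · change 18 * C (1/5) * X 2 ^ 3 = C (18/5) * X 2 ^ 3
    rw [h18]
  · change 54 * C (1/5) * (X 1 * X 2 ^ 2) = C (54/5) * (X 1 * X 2 ^ 2)
    rw [h54]
  · change 54 * C (1/5) ^ 2 * (X 1 ^ 2 * X 2 + X 0 * X 2 ^ 2) =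
      C (54/25) * (X 1 ^ 2 * X 2 + X 0 * X 2 ^ 2)
    rw [h54']
  · change 9 * C (1/5) ^ 2 * (X 1 ^ 3 + X 0 * X 1 * X 2) + 9 * C (1/5) * (X 0 * X 1 * X 2) =
      C (9/25) * (X 1 ^ 3 + 6 * X 0 * X 1 * X 2)
    rw [h9]
    linear_combination (-(9 * C (1/5) * (X 0 * X 1 * X 2))) * h5
  · change 54 * C (1/5) ^ 2 * (X 0 * X 1 ^ 2 + X 0 ^ 2 * X 2) =
      C (54/25) * (X 0 * X 1 ^ 2 + X 0 ^ 2 * X 2)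
    rw [h54']
  · change 54 * C (1/5) * (X 0 ^ 2 * X 1) = C (54/5) * (X 0 ^ 2 * X 1)
    rw [h54]
  · change 18 * C (1/5) * X 0 ^ 3 = C (18/5) * X 0 ^ 3
    rw [h18]

theorem pfScalar_ne_zero (i : Fin 7) : pfScalar i ≠ 0 := by
  fin_cases i <;> simp [pfScalar]

theorem pfCubic_homogeneous (i : Fin 7) : (pfCubic i).IsHomogeneous 3 := by
  have h (j : Fin 3) : (X j : R3).IsHomogeneous 1 := isHomogeneous_X _ _
  have h6 : (6 : R3).IsHomogeneous 0 := by
    rw [← map_ofNat (C : ℂ →+* R3) 6]; exact isHomogeneous_C _ _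
  fin_cases i
  · exact (h 0).pow 3
  · exact ((h 0).pow 2).mul (h 1)
  · exact ((h 0).mul ((h 1).pow 2)).add (((h 0).pow 2).mul (h 2))
  · exact ((h 1).pow 3).add (((h6.mul (h 0)).mul (h 1)).mul (h 2))
  · exact (((h 1).pow 2).mul (h 2)).add ((h 0).mul ((h 2).pow 2))
  · exact (h 1).mul ((h 2).pow 2)
  · exact (h 2).pow 3

theorem stmt8 :
    (∀ i : Fin 7, ∃ c : R3, c.IsHomogeneous 3 ∧
      (eta.submatrix i.succAbove i.succAbove).det = c ^ 2) ∧
    Ideal.span (Set.range fun i : Fin 7 => (eta.submatrix i.succAbove i.succAbove).det) =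
      Ideal.span (Set.range fun i : Fin 7 => pfCubic i ^ 2) := by
  refine ⟨fun i => ⟨_, ?_, det_eta i⟩, le_antisymm ?_ ?_⟩
  · simpa using (isHomogeneous_C (Fin 3) (pfScalar i)).mul (pfCubic_homogeneous i.rev)
  · rw [Ideal.span_le]
    rintro _ ⟨i, rfl⟩
    simp only [det_eta, mul_pow]
    exact Ideal.mul_mem_left _ _ (Ideal.subset_span ⟨i.rev, rfl⟩)
  · rw [Ideal.span_le]
    rintro _ ⟨i, rfl⟩
    have h : pfCubic i ^ 2 = C ((pfScalar i.rev)⁻¹ ^ 2) *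
        (eta.submatrix i.rev.succAbove i.rev.succAbove).det := by
      rw [det_eta, Fin.rev_rev, mul_pow, ← mul_assoc, ← map_pow, ← map_mul, ← mul_pow,
        inv_mul_cancel₀ (pfScalar_ne_zero _)]
      simp
    simp only [SetLike.mem_coe]
    rw [h]
    exact Ideal.mul_mem_left _ _ (Ideal.subset_span ⟨i.rev, rfl⟩)
end
end

section
/- Let η be the 7×7 skew-symmetric matrix of linear forms over ℂ[y₂,y₀,y₋₂] defined in the context, regarded as a matrix over the polynomial ring ℂ[a₁,…,a₁₂][y₂,y₀,y₋₂], and let P₃ be the 3×7 matrix over ℂ[a₁,…,a₁₂] with rows (1, 0, 0, a₁, a₂, a₃, a₄), (0, 1, 0, a₅, a₆, a₇, a₈), (0, 0, 1, a₉, a₁₀, a₁₁, a₁₂). Then the ideal of ℂ[a₁,…,a₁₂] generated by all coefficients (with respect to the monomials y₂, y₀, y₋₂) of the entries of the 3×3 skew-symmetric matrix P₃ η P₃ᵀ equals the ideal generated by the nine polynomials 5a₂+3a₇, a₃+9a₈, 2a₂a₅−2a₁a₆+(1/5)a₄, 10a₁−a₁₁, 5a₂−9a₁₂, 6a₂a₉−6a₁a₁₀−a₃,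 6a₅+a₁₀, 5a₆+a₁₁, 2a₆a₉−2a₅a₁₀−(1/3)a₇−(1/5)a₁₂. (These nine equations define the affine chart V₁₂ of the Mukai–Umemura threefold X = Gr^ω(3,U₆) inside the standard affine chart of Gr(3,7).) -/
open MvPolynomial Matrix

noncomputable section

/-- `A = ℂ[a₁, …, a₁₂]`, with `aₖ = X (k-1)`. -/
abbrev A12 : Type := MvPolynomial (Fin 12) ℂ

/-- `RA = A[y₂, y₀, y₋₂]`, with `y₂ = X 0`, `y₀ = X 1`, `y₋₂ = X 2`. -/
abbrev RA : Type := MvPolynomial (Fin 3) A12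

/-- The SL₂-invariant net of alternating forms `η`, regarded over `ℂ[a₁,…,a₁₂][y₂,y₀,y₋₂]`. -/
def etaA : Matrix (Fin 7) (Fin 7) RA :=
  !![0, 0, 0, 0, 0, -(C (C (3/5)) * X 0), -(C (C (9/5)) * X 1);
     0, 0, 0, 0, X 0, C (C (1/5)) * X 1, -(C (C (3/5)) * X 2);
     0, 0, 0, -(6 * X 0), -(X 1), X 2, 0;
     0, 0, 6 * X 0, 0, -(6 * X 2), 0, 0;
     0, -(X 0), X 1, 6 * X 2, 0, 0, 0;
     C (C (3/5)) * X 0, -(C (C (1/5)) * X 1), -(X 2), 0, 0, 0, 0;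
     C (C (9/5)) * X 1, C (C (3/5)) * X 2, 0, 0, 0, 0, 0]

/-- The 3×7 matrix `P₃` of the standard affine chart of `Gr(3,7)`. -/
def P3 : Matrix (Fin 3) (Fin 7) A12 :=
  !![1, 0, 0, X 0, X 1, X 2, X 3;
     0, 1, 0, X 4, X 5, X 6, X 7;
     0, 0, 1, X 8, X 9, X 10, X 11]

/-- The nine polynomials defining the affine chart `V₁₂` of the Mukai–Umemura threefold. -/
def nineEqs : Set A12 :=
  {5 * X 1 + 3 * X 6,
   X 2 + 9 * X 7,
   2 * X 1 * X 4 - 2 * X 0 * X 5 + C (1/5) * X 3,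
   10 * X 0 - X 10,
   5 * X 1 - 9 * X 11,
   6 * X 1 * X 8 - 6 * X 0 * X 9 - X 2,
   6 * X 4 + X 9,
   5 * X 5 + X 10,
   2 * X 5 * X 8 - 2 * X 4 * X 9 - C (1/3) * X 6 - C (1/5) * X 11}

set_option linter.unusedSimpArgs false

/-- A linear form in the three variables `y`. -/
def linY (a b c : A12) : RA := C a * X 0 + C b * X 1 + C c * X 2

def f0 : A12 := -(C (3/5) * X 6) - X 1
def f1 : A12 := -(C (9/5) * X 7) - C (1/5) * X 2
def f2 : A12 := C (3/5) * X 3 + 6 * (X 1 * X 4 - X 0 * X 5)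
def g0 : A12 := 6 * X 0 - C (3/5) * X 10
def g1 : A12 := X 1 - C (9/5) * X 11
def g2 : A12 := 6 * (X 1 * X 8 - X 0 * X 9) - X 2
def h0 : A12 := 6 * X 4 + X 9
def h1 : A12 := C (1/5) * X 10 + X 5
def h2 : A12 := 6 * (X 5 * X 8 - X 4 * X 9) - X 6 - C (3/5) * X 11

theorem prod_eq : P3.map (C : A12 → RA) * etaA * (P3.map (C : A12 → RA))ᵀ =
    !![0, linY f0 f1 f2, linY g0 g1 g2;
       -linY f0 f1 f2, 0, linY h0 h1 h2;
       -linY g0 g1 g2, -linY h0 h1 h2, 0] := by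
  have h6 : (C (6 : A12) : RA) = 6 := map_ofNat C 6
  ext1 i j
  fin_cases i <;> fin_cases j <;>
    simp [Matrix.mul_apply, Fin.sum_univ_succ, P3, etaA, linY, f0, f1, f2, g0, g1, g2, h0, h1, h2,
      -map_div₀, -one_div, Fin.succ] <;>
    (try simp only [h6]) <;> ring

theorem coeff_linY_mem (I : Ideal A12) {a b c : A12} (ha : a ∈ I) (hb : b ∈ I) (hc : c ∈ I)
    (d : Fin 3 →₀ ℕ) : coeff d (linY a b c) ∈ I := by
  simp only [linY, coeff_add, coeff_C_mul]
  exact I.add_mem (I.add_mem (I.mul_mem_right _ ha) (I.mul_mem_right _ hb)) (I.mul_mem_right _ hc)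

theorem coeff_linY_0 (a b c : A12) : coeff (Finsupp.single 0 1) (linY a b c) = a := by
  simp [linY, coeff_C_mul, coeff_X, Finsupp.single_left_inj]

theorem coeff_linY_1 (a b c : A12) : coeff (Finsupp.single 1 1) (linY a b c) = b := by
  simp [linY, coeff_C_mul, coeff_X, Finsupp.single_left_inj]

theorem coeff_linY_2 (a b c : A12) : coeff (Finsupp.single 2 1) (linY a b c) = c := by
  simp [linY, coeff_C_mul, coeff_X, Finsupp.single_left_inj]

theorem c5 : 5 * (C (1/5) : A12) = 1 := by
  rw [← map_ofNat (C : ℂ →+* A12) 5, ← map_mul, ← map_one C]; norm_num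

theorem c3 : 3 * (C (1/3) : A12) = 1 := by
  rw [← map_ofNat (C : ℂ →+* A12) 3, ← map_mul, ← map_one C]; norm_num

theorem c35 : (C (3/5) : A12) = 3 * C (1/5) := by
  rw [← map_ofNat (C : ℂ →+* A12) 3, ← map_mul]; norm_num

theorem c95 : (C (9/5) : A12) = 9 * C (1/5) := by
  rw [← map_ofNat (C : ℂ →+* A12) 9, ← map_mul]; norm_num

theorem mem_of_mul {I : Ideal A12} {x y : A12} (u : A12) (hy : y ∈ I) (h : x = u * y) : x ∈ I :=
  h ▸ I.mul_mem_left u hy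

theorem f0_eq : f0 = (-C (1/5)) * (5 * X 1 + 3 * X 6) := by
  simp only [f0, c35, c95]
  linear_combination X 1 * c5

theorem f0_eq' : (5 * X 1 + 3 * X 6 : A12) = (-5) * f0 := by
  simp only [f0, c35, c95]
  linear_combination -3*X 6*c5

theorem f1_eq : f1 = (-C (1/5)) * (X 2 + 9 * X 7) := by
  simp only [f1, c35, c95]
  linear_combination 0

theorem f1_eq' : (X 2 + 9 * X 7 : A12) = (-5) * f1 := by
  simp only [f1, c35, c95]
  linear_combination -(X 2+9*X 7)*c5

theorem f2_eq : f2 = (3) * (2 * X 1 * X 4 - 2 * X 0 * X 5 + C (1/5) * X 3) := by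
  simp only [f2, c35, c95]
  linear_combination 0

theorem f2_eq' : (2 * X 1 * X 4 - 2 * X 0 * X 5 + C (1/5) * X 3 : A12) = (C (1/3)) * f2 := by
  simp only [f2, c35, c95]
  linear_combination -(2*X 1*X 4-2*X 0*X 5+C (1/5)*X 3)*c3

theorem g0_eq : g0 = (3 * C (1/5)) * (10 * X 0 - X 10) := by
  simp only [g0, c35, c95]
  linear_combination -6*X 0*c5

theorem g0_eq' : (10 * X 0 - X 10 : A12) = (5 * C (1/3)) * g0 := by
  simp only [g0, c35, c95]
  linear_combination -10*X 0*c3+X 10*(c5*3*C (1/3)+c3)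

theorem g1_eq : g1 = (C (1/5)) * (5 * X 1 - 9 * X 11) := by
  simp only [g1, c35, c95]
  linear_combination -X 1*c5

theorem g1_eq' : (5 * X 1 - 9 * X 11 : A12) = (5) * g1 := by
  simp only [g1, c35, c95]
  linear_combination 9*X 11*c5

theorem g2_eq : g2 = (1) * (6 * X 1 * X 8 - 6 * X 0 * X 9 - X 2) := by
  simp only [g2, c35, c95]
  linear_combination 0

theorem g2_eq' : (6 * X 1 * X 8 - 6 * X 0 * X 9 - X 2 : A12) = (1) * g2 := by
  simp only [g2, c35, c95]
  linear_combination 0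

theorem h0_eq : h0 = (1) * (6 * X 4 + X 9) := by
  simp only [h0, c35, c95]
  linear_combination 0

theorem h0_eq' : (6 * X 4 + X 9 : A12) = (1) * h0 := by
  simp only [h0, c35, c95]
  linear_combination 0

theorem h1_eq : h1 = (C (1/5)) * (5 * X 5 + X 10) := by
  simp only [h1, c35, c95]
  linear_combination -X 5*c5

theorem h1_eq' : (5 * X 5 + X 10 : A12) = (5) * h1 := by
  simp only [h1, c35, c95]
  linear_combination -X 10*c5

theorem h2_eq : h2 = (3) * (2 * X 5 * X 8 - 2 * X 4 * X 9 - C (1/3) * X 6 - C (1/5) * X 11) := by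
  simp only [h2, c35, c95]
  linear_combination X 6 * c3

theorem h2_eq' : (2 * X 5 * X 8 - 2 * X 4 * X 9 - C (1/3) * X 6 - C (1/5) * X 11 : A12) = (C (1/3)) * h2 := by
  simp only [h2, c35, c95]
  linear_combination -(2*X 5*X 8-2*X 4*X 9-C (1/5)*X 11)*c3

theorem stmt9 :
    Ideal.span {x : A12 | ∃ (i j : Fin 3) (d : Fin 3 →₀ ℕ),
        MvPolynomial.coeff d ((P3.map (C : A12 → RA) * etaA * (P3.map (C : A12 → RA))ᵀ) i j) = x} =
      Ideal.span nineEqs := by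
  rw [prod_eq]
  apply le_antisymm
  · rw [Ideal.span_le]
    have mf0 : f0 ∈ Ideal.span nineEqs :=
      mem_of_mul _ (Ideal.subset_span (by simp [nineEqs, -map_div₀, -one_div])) f0_eq
    have mf1 : f1 ∈ Ideal.span nineEqs :=
      mem_of_mul _ (Ideal.subset_span (by simp [nineEqs, -map_div₀, -one_div])) f1_eq
    have mf2 : f2 ∈ Ideal.span nineEqs :=
      mem_of_mul _ (Ideal.subset_span (by simp [nineEqs, -map_div₀, -one_div])) f2_eq
    have mg0 : g0 ∈ Ideal.span nineEqs :=
      mem_of_mul _ (Ideal.subset_span (by simp [nineEqs, -map_div₀, -one_div])) g0_eq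
    have mg1 : g1 ∈ Ideal.span nineEqs :=
      mem_of_mul _ (Ideal.subset_span (by simp [nineEqs, -map_div₀, -one_div])) g1_eq
    have mg2 : g2 ∈ Ideal.span nineEqs :=
      mem_of_mul _ (Ideal.subset_span (by simp [nineEqs, -map_div₀, -one_div])) g2_eq
    have mh0 : h0 ∈ Ideal.span nineEqs :=
      mem_of_mul _ (Ideal.subset_span (by simp [nineEqs, -map_div₀, -one_div])) h0_eq
    have mh1 : h1 ∈ Ideal.span nineEqs :=
      mem_of_mul _ (Ideal.subset_span (by simp [nineEqs, -map_div₀, -one_div])) h1_eq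
    have mh2 : h2 ∈ Ideal.span nineEqs :=
      mem_of_mul _ (Ideal.subset_span (by simp [nineEqs, -map_div₀, -one_div])) h2_eq
    rintro x ⟨i, j, d, rfl⟩
    have k1 := coeff_linY_mem _ mf0 mf1 mf2 d
    have k2 := coeff_linY_mem _ mg0 mg1 mg2 d
    have k3 := coeff_linY_mem _ mh0 mh1 mh2 d
    fin_cases i <;> fin_cases j <;> simp [k1, k2, k3]
  · rw [Ideal.span_le]
    rintro x hx
    simp only [nineEqs, Set.mem_insert_iff, Set.mem_singleton_iff] at hx
    rcases hx with rfl | rfl | rfl | rfl | rfl | rfl | rfl | rfl | rfl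
    · exact mem_of_mul _ (Ideal.subset_span ⟨0, 1, Finsupp.single 0 1, coeff_linY_0 _ _ _⟩) f0_eq'
    · exact mem_of_mul _ (Ideal.subset_span ⟨0, 1, Finsupp.single 1 1, coeff_linY_1 _ _ _⟩) f1_eq'
    · exact mem_of_mul _ (Ideal.subset_span ⟨0, 1, Finsupp.single 2 1, coeff_linY_2 _ _ _⟩) f2_eq'
    · exact mem_of_mul _ (Ideal.subset_span ⟨0, 2, Finsupp.single 0 1, coeff_linY_0 _ _ _⟩) g0_eq'
    · exact mem_of_mul _ (Ideal.subset_span ⟨0, 2, Finsupp.single 1 1, coeff_linY_1 _ _ _⟩) g1_eq'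
    · exact mem_of_mul _ (Ideal.subset_span ⟨0, 2, Finsupp.single 2 1, coeff_linY_2 _ _ _⟩) g2_eq'
    · exact mem_of_mul _ (Ideal.subset_span ⟨1, 2, Finsupp.single 0 1, coeff_linY_0 _ _ _⟩) h0_eq'
    · exact mem_of_mul _ (Ideal.subset_span ⟨1, 2, Finsupp.single 1 1, coeff_linY_1 _ _ _⟩) h1_eq'
    · exact mem_of_mul _ (Ideal.subset_span ⟨1, 2, Finsupp.single 2 1, coeff_linY_2 _ _ _⟩) h2_eq'
end
end
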